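/- arXiv:1810.06170 — 2 statements merged into one kernel-verified Lean document; each statement's English description precedes it below -/
import Mathlib

section
/- Let s_n be the number of walks of length n with steps in {(1,1),(−1,1),(0,−1)} (the model NE, NW, S), beginning at the origin and confined to ℕ². Then there is a constant c > 0 such that for all n ≥ 1, | s_n · 3^{−n} · n^{1/2} − √3/(2√π) | ≤ c/n; that is, s_n = 3^n n^{−1/2} ( √3/(2√π) + O(1/n) ). -/
open Finset

/-- The number of walks of length `n` with steps in the set `S ⊆ ℤ^d`, beginning at
the origin and confined to the non-negative orthant `ℕ^d`. -/
noncomputable def walkCount (d : ℕ) (S : Set (Fin d → ℤ)) (n : ℕ) : ℕ :=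
  Nat.card {u : Fin n → (Fin d → ℤ) //
    (∀ k : Fin n, u k ∈ S) ∧
    ∀ k : Fin n, ∀ m : Fin d, 0 ≤ ∑ j ∈ Finset.Iic k, u j m}

/-!
Of a walk with `n` steps, `m` of them upward, the heights form a path of `m` up and `n - m` down
steps, and the abscissas a walk with `m` steps `±1`. Reflection in the lines `x = -1` and `y = -1`
shows that the number of walks is `∑ C(n, m) (M m [n ≤ 2m] - M (m - 1) [n + 2 ≤ 2m])`, where `M m`
is the middle binomial coefficient. Since `M m ≤ 2 ^ m`, both conditions can be dropped at a cost of
order `√8 ^ n`, and what remains is `3 ^ n` times the mean of `(M m - M (m - 1)) / 2 ^ m` under the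
binomial distribution with `n` trials and success probability `2 / 3`. By Wallis' product this
sequence is `(2π(m + 1))^(-1/2) + O(m^(-3/2))`, and as the distribution concentrates around
`2n / 3`, its mean is `(4πn / 3)^(-1/2) + O(n^(-3/2))`.
-/

/-! ### Walks confined to a region -/

section ConfinedWalks

variable {M : Type*} [AddCommMonoid M]

/-- The walks `p, p + u 0, p + u 0 + u 1, …` of length `n` with steps in `S` and start `p`, given by
their sequences `u` of steps, whose points after the start all lie in the region `Q`. -/
def confinedWalks (S Q : Set M) (n : ℕ) (p : M) : Set (Fin n → M) :=
  {u | (∀ k, u k ∈ S) ∧ ∀ k, p + ∑ j ∈ Iic k, u j ∈ Q}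

theorem sum_Iic_succ_cons {n : ℕ} (s : M) (u : Fin n → M) (k : Fin n) :
    ∑ j ∈ Iic k.succ, (Fin.cons s u : Fin (n + 1) → M) j = s + ∑ j ∈ Iic k, u j := by
  rw [← Icc_bot, ← add_sum_Ioc_eq_sum_Icc bot_le, bot_eq_zero, ← Fin.map_succEmb_Iic, sum_map]
  simp

theorem cons_mem_confinedWalks {S Q : Set M} {n : ℕ} {p s : M} {u : Fin n → M} :
    (Fin.cons s u : Fin (n + 1) → M) ∈ confinedWalks S Q (n + 1) p ↔
      (s ∈ S ∧ p + s ∈ Q) ∧ u ∈ confinedWalks S Q n (p + s) := by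
  have sum_Iic_zero : ∑ j ∈ Iic (0 : Fin (n + 1)), (Fin.cons s u : Fin (n + 1) → M) j = s := by
    rw [← bot_eq_zero, Iic_bot, sum_singleton, bot_eq_zero, Fin.cons_zero]
  simp only [confinedWalks, Set.mem_ofPred_eq, Fin.forall_fin_succ (n := n), sum_Iic_succ_cons,
    sum_Iic_zero, Fin.cons_zero, Fin.cons_succ, add_assoc]
  tauto

/-- Splitting a nonempty confined walk into its first step and the remaining walk. -/
def confinedWalksSuccEquiv (S Q : Set M) (n : ℕ) (p : M) :
    confinedWalks S Q (n + 1) p ≃ Σ s : {s // s ∈ S ∧ p + s ∈ Q}, confinedWalks S Q n (p + s) where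
  toFun u :=
    have hu := cons_mem_confinedWalks.1 ((Fin.cons_self_tail u.1).symm ▸ u.2)
    ⟨⟨u.1 0, hu.1⟩, ⟨Fin.tail u.1, hu.2⟩⟩
  invFun x := ⟨Fin.cons x.1 x.2, cons_mem_confinedWalks.2 ⟨x.1.2, x.2.2⟩⟩
  left_inv u := Subtype.ext (Fin.cons_self_tail u.1)
  right_inv _ := rfl

theorem finite_confinedWalks (S : Finset M) (Q : Set M) (n : ℕ) (p : M) :
    (confinedWalks (S : Set M) Q n p).Finite :=
  (Set.Finite.pi fun _ => S.finite_toSet).subset fun _ hu k _ => hu.1 k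

theorem card_confinedWalks_succ (S : Finset M) (Q : Set M) [DecidablePred (· ∈ Q)] (n : ℕ)
    (p : M) :
    Nat.card (confinedWalks (S : Set M) Q (n + 1) p) =
      ∑ s ∈ S with p + s ∈ Q, Nat.card (confinedWalks (S : Set M) Q n (p + s)) := by
  have (s : M) : Finite (confinedWalks (S : Set M) Q n (p + s)) := finite_confinedWalks S Q n _
  have mem_iff (s : M) : s ∈ S.filter (p + · ∈ Q) ↔ s ∈ (S : Set M) ∧ p + s ∈ Q := by simp
  let _ : Fintype {s // s ∈ (S : Set M) ∧ p + s ∈ Q} := Fintype.subtype _ mem_iff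
  rw [Nat.card_congr (confinedWalksSuccEquiv ..), Nat.card_sigma, Finset.sum_subtype _ mem_iff]

/-- A solution of the recurrence of unconfined walks that vanishes at the exits from the region
counts the confined walks: this is what makes the method of images work. -/
theorem card_confinedWalks_eq_of_recurrence {R : Type*} [AddCommMonoidWithOne R] (S : Finset M)
    (Q : Set M) (f : ℕ → M → R) (f_zero : ∀ p ∈ Q, f 0 p = 1)
    (f_succ : ∀ n, ∀ p ∈ Q, f (n + 1) p = ∑ s ∈ S, f n (p + s))
    (f_exit : ∀ n, ∀ p ∈ Q, ∀ s ∈ S, p + s ∉ Q → f n (p + s) = 0) (n : ℕ) {p : M} (hp : p ∈ Q) :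
    (Nat.card (confinedWalks (S : Set M) Q n p) : R) = f n p := by
  classical
  induction n generalizing p with
  | zero =>
    have : confinedWalks (S : Set M) Q 0 p = Set.univ := by ext; simp [confinedWalks]
    simp [this, f_zero p hp]
  | succ n ih =>
    rw [card_confinedWalks_succ, Nat.cast_sum, f_succ n p hp, sum_filter]
    refine sum_congr rfl fun s hs => ?_
    split_ifs with hps
    · exact ih hps
    · exact (f_exit n p hp s hs hps).symm

end ConfinedWalks

theorem walkCount_eq_card_confinedWalks (d : ℕ) (S : Set (Fin d → ℤ)) (n : ℕ) :
    walkCount d S n = Nat.card (confinedWalks S (Set.Ici 0) n 0) := by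
  simp only [walkCount, confinedWalks, Set.mem_Ici, Pi.le_def, Pi.zero_apply, zero_add,
    Finset.sum_apply]
  rfl

/-! ### Exact enumeration -/

/-- The number of walks with `m` steps `±1` that start at `i` and stay nonnegative. By the
reflection principle it is the number of all walks with `m` steps `±1` and displacement `m - 2d`
in `[-i, i + 1]`, where `d` is the number of steps `-1`. -/
def halfLineCount (m : ℕ) (i : ℤ) : ℤ :=
  ∑ d ∈ range (m + 1),
    (m.choose d : ℤ) * if -i ≤ (m : ℤ) - 2 * d ∧ (m : ℤ) - 2 * d ≤ i + 1 then 1 else 0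

theorem halfLineCount_zero {i : ℤ} (hi : 0 ≤ i) : halfLineCount 0 i = 1 := by
  have : 0 ≤ i + 1 := by omega
  simp [halfLineCount, hi, this]

theorem halfLineCount_neg_one (m : ℕ) : halfLineCount m (-1) = 0 := by
  refine sum_eq_zero fun d _ => ?_
  rw [if_neg (by omega), mul_zero]

theorem halfLineCount_succ (m : ℕ) {i : ℤ} (hi : 0 ≤ i) :
    halfLineCount (m + 1) i = halfLineCount m (i + 1) + halfLineCount m (i - 1) := by
  have pascal := sum_choose_succ_mul (R := ℤ)
    (fun d _ =>
      if -i ≤ ((m + 1 : ℕ) : ℤ) - 2 * d ∧ ((m + 1 : ℕ) : ℤ) - 2 * d ≤ i + 1 then 1 else 0) m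
  simp only [halfLineCount]
  rw [pascal, ← sum_add_distrib, ← sum_add_distrib]
  refine sum_congr rfl fun d _ => ?_
  rw [← mul_add, ← mul_add]
  push_cast
  congr 1
  split_ifs <;> omega

theorem halfLineCount_origin (m : ℕ) : halfLineCount m 0 = m.choose (m / 2) := by
  rw [halfLineCount, sum_eq_single (m / 2)]
  · rw [if_pos (by omega), mul_one]
  · intro d _ hd
    rw [if_neg (by omega), mul_zero]
  · intro h
    simp only [mem_range] at h
    omega

/-- The steps north-east, north-west and south. -/
def stepsNENWS : Finset (Fin 2 → ℤ) := {![1, 1], ![-1, 1], ![0, -1]}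

/-- The contribution to `imageSum` of each choice of the `m` upward steps among `n` steps from
`(i, j)`. The first term counts the choices of their horizontal directions for which the walk ends
above `y = -1`, without regard to the earlier heights; the second one is its image under reflection
in `y = -1`, which exchanges up and down before the first visit to this line and thus changes the
number of upward steps by `j + 1`. -/
def imageTerm (n m : ℕ) (i j : ℤ) : ℤ :=
  (if n ≤ 2 * m + j then halfLineCount m i else 0) -
    if n + j + 2 ≤ 2 * m then halfLineCount (m - j - 1).toNat i else 0

/-- The number of walks of length `n` from `p` confined to the quadrant, by the method of images. -/
def imageSum (n : ℕ) (p : Fin 2 → ℤ) : ℤ :=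
  ∑ m ∈ range (n + 1), (n.choose m : ℤ) * imageTerm n m (p 0) (p 1)

theorem imageTerm_neg_one_left (n m : ℕ) (j : ℤ) : imageTerm n m (-1) j = 0 := by
  simp [imageTerm, halfLineCount_neg_one]

theorem imageTerm_neg_one_right (n m : ℕ) (i : ℤ) : imageTerm n m i (-1) = 0 := by
  have hiff : (n : ℤ) + -1 + 2 ≤ 2 * m ↔ (n : ℤ) ≤ 2 * m + -1 := by omega
  simp [imageTerm, hiff]

theorem imageTerm_succ {n m : ℕ} (hm : m ≤ n) {i j : ℤ} (hi : 0 ≤ i) (hj : 0 ≤ j) :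
    imageTerm (n + 1) m i j + imageTerm (n + 1) (m + 1) i j =
      imageTerm n m (i + 1) (j + 1) + imageTerm n m (i - 1) (j + 1) + imageTerm n m i (j - 1) := by
  have east_west := halfLineCount_succ m hi
  have east_west_image (h : (n : ℤ) + j + 3 ≤ 2 * m) :
      halfLineCount (m - j - 1).toNat i = halfLineCount (m - (j + 1) - 1).toNat (i + 1) +
        halfLineCount (m - (j + 1) - 1).toNat (i - 1) := by
    rw [← halfLineCount_succ _ hi]
    congr 1
    omega
  have shift₁ : ((m + 1 : ℕ) : ℤ) - j - 1 = m - j := by push_cast; ring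
  have shift₂ : (m : ℤ) - (j - 1) - 1 = m - j := by ring
  simp only [imageTerm, shift₁, shift₂]
  push_cast
  split_ifs <;> omega

theorem imageSum_zero {p : Fin 2 → ℤ} (hp : 0 ≤ p) : imageSum 0 p = 1 := by
  have h₁ : 0 ≤ p 1 := hp 1
  simp [imageSum, imageTerm, halfLineCount_zero (hp 0), h₁, show ¬ p 1 + 2 ≤ 0 by omega]

theorem imageSum_succ (n : ℕ) {p : Fin 2 → ℤ} (hp : 0 ≤ p) :
    imageSum (n + 1) p = ∑ s ∈ stepsNENWS, imageSum n (p + s) := by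
  have pascal := sum_choose_succ_mul (R := ℤ) (fun m _ => imageTerm (n + 1) m (p 0) (p 1)) n
  have sum_steps (f : (Fin 2 → ℤ) → ℤ) :
      ∑ s ∈ stepsNENWS, f s = f ![1, 1] + f ![-1, 1] + f ![0, -1] := by
    simp [stepsNENWS, add_assoc]
  rw [sum_steps]
  simp only [imageSum]
  rw [pascal, ← sum_add_distrib, ← sum_add_distrib, ← sum_add_distrib]
  refine sum_congr rfl fun m hm => ?_
  simp only [← mul_add]
  rw [imageTerm_succ (Nat.lt_succ_iff.1 (mem_range.1 hm)) (hp 0) (hp 1)]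
  simp [sub_eq_add_neg]

theorem imageSum_exit (n : ℕ) {p s : Fin 2 → ℤ} (hp : 0 ≤ p) (hs : s ∈ stepsNENWS)
    (hps : ¬ 0 ≤ p + s) : imageSum n (p + s) = 0 := by
  have h₀ : 0 ≤ p 0 := hp 0
  have h₁ : 0 ≤ p 1 := hp 1
  have : (p + s) 0 = -1 ∨ (p + s) 1 = -1 := by
    simp only [stepsNENWS, mem_insert, mem_singleton] at hs
    simp only [Pi.le_def, Fin.forall_fin_two, Pi.zero_apply, Pi.add_apply] at hps ⊢
    rcases hs with rfl | rfl | rfl <;> simp at hps ⊢ <;> omega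
  rcases this with h | h <;>
    simp [imageSum, h, imageTerm_neg_one_left, imageTerm_neg_one_right]

theorem coe_stepsNENWS : (stepsNENWS : Set (Fin 2 → ℤ)) = {![1, 1], ![-1, 1], ![0, -1]} := by
  simp [stepsNENWS]

theorem walkCount_stepsNENWS (n : ℕ) : (walkCount 2 stepsNENWS n : ℤ) = imageSum n 0 := by
  rw [walkCount_eq_card_confinedWalks]
  exact card_confinedWalks_eq_of_recurrence stepsNENWS (Set.Ici 0) imageSum
    (fun _ hp => imageSum_zero hp) (fun n _ hp => imageSum_succ n hp)
    (fun n _ hp _ hs hps => imageSum_exit n hp hs hps) n Set.self_mem_Ici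

/-! ### Binomial means -/

/-- Expanding in `x ^ 2` rather than in `x` leaves only even powers of `x = √(m + 1)`, whose
binomial means can be computed. -/
theorem abs_inv_sub_inv_add_le {x b : ℝ} (hx : 0 < x) (hb : 0 < b) :
    |x⁻¹ - b⁻¹ + (x ^ 2 - b ^ 2) / (2 * b ^ 3)| ≤ (x ^ 2 - b ^ 2) ^ 2 / (x ^ 2 * b ^ 3) := by
  have remainder : x⁻¹ - b⁻¹ + (x ^ 2 - b ^ 2) / (2 * b ^ 3) =
      (x - b) ^ 2 * ((x + 2 * b) * x) / (2 * (x ^ 2 * b ^ 3)) := by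
    field_simp
    ring
  have bound : (x ^ 2 - b ^ 2) ^ 2 / (x ^ 2 * b ^ 3) =
      (x - b) ^ 2 * (2 * (x + b) ^ 2) / (2 * (x ^ 2 * b ^ 3)) := by
    field_simp
    ring
  rw [remainder, bound, abs_of_nonneg (by positivity)]
  have : (x + 2 * b) * x ≤ 2 * (x + b) ^ 2 := by nlinarith [mul_pos hx hb]
  gcongr

theorem inv_pow_three_le {x b : ℝ} (hx : 0 < x) (hb : 0 < b) :
    (x ^ 3)⁻¹ ≤ b⁻¹ * ((x ^ 2)⁻¹ + b ^ 2 * (x ^ 4)⁻¹) := by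
  have difference : b⁻¹ * ((x ^ 2)⁻¹ + b ^ 2 * (x ^ 4)⁻¹) - (x ^ 3)⁻¹ =
      ((x - b) ^ 2 + x * b) / (b * x ^ 4) := by
    field_simp
    ring
  have : 0 ≤ ((x - b) ^ 2 + x * b) / (b * x ^ 4) := by positivity
  linarith

section BinomialMean

/-- The expectation of `f` under the binomial distribution with `n` trials and success probability
`p`, as a linear functional of `f`. -/
noncomputable def binomialMean (p : ℝ) (n : ℕ) : (ℕ → ℝ) →ₗ[ℝ] ℝ :=
  ∑ m ∈ range (n + 1), (n.choose m * p ^ m * (1 - p) ^ (n - m)) • LinearMap.proj m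

theorem binomialMean_apply (p : ℝ) (n : ℕ) (f : ℕ → ℝ) :
    binomialMean p n f = ∑ m ∈ range (n + 1), n.choose m * p ^ m * (1 - p) ^ (n - m) * f m := by
  simp [binomialMean]

theorem binomialMean_one (p : ℝ) (n : ℕ) : binomialMean p n 1 = 1 := by
  have key := add_pow p (1 - p) n
  rw [add_sub_cancel, one_pow] at key
  refine (binomialMean_apply p n 1).trans (Eq.trans ?_ key.symm)
  exact sum_congr rfl fun m _ => by rw [Pi.one_apply]; ring

theorem binomialMean_succ_cast_mul (p : ℝ) (n : ℕ) (f : ℕ → ℝ) :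
    binomialMean p (n + 1) (fun m => m * f m) =
      (n + 1) * p * binomialMean p n (fun m => f (m + 1)) := by
  rw [binomialMean_apply, binomialMean_apply, sum_range_succ', mul_sum]
  simp only [Nat.cast_zero, zero_mul, mul_zero, add_zero]
  refine sum_congr rfl fun m _ => ?_
  have absorb : ((n : ℝ) + 1) * n.choose m = (n + 1).choose (m + 1) * (m + 1) :=
    mod_cast Nat.add_one_mul_choose_eq n m
  rw [Nat.add_sub_add_right, pow_succ]
  push_cast
  linear_combination -(p ^ m * p * (1 - p) ^ (n - m) * f (m + 1)) * absorb

theorem binomialMean_cast (p : ℝ) (n : ℕ) : binomialMean p n (fun m => m) = n * p := by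
  cases n with
  | zero => simp [binomialMean_apply]
  | succ n =>
    have key := binomialMean_succ_cast_mul p n 1
    simp only [Pi.one_apply, mul_one] at key
    rw [key, ← Pi.one_def, binomialMean_one, mul_one, Nat.cast_add_one]

variable {p : ℝ}

theorem binomialMean_mono (hp₀ : 0 ≤ p) (hp₁ : p ≤ 1) (n : ℕ) {f g : ℕ → ℝ} (hfg : ∀ m, f m ≤ g m) :
    binomialMean p n f ≤ binomialMean p n g := by
  rw [binomialMean_apply, binomialMean_apply]
  have : 0 ≤ 1 - p := sub_nonneg.2 hp₁
  gcongr with m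
  exact hfg m

theorem abs_binomialMean_le (hp₀ : 0 ≤ p) (hp₁ : p ≤ 1) (n : ℕ) {f g : ℕ → ℝ}
    (hfg : ∀ m, |f m| ≤ g m) : |binomialMean p n f| ≤ binomialMean p n g :=
  abs_le.2 ⟨by
    rw [← map_neg]
    exact binomialMean_mono hp₀ hp₁ n fun m => (abs_le.1 (hfg m)).1,
    binomialMean_mono hp₀ hp₁ n fun m => (abs_le.1 (hfg m)).2⟩

theorem binomialMean_inv_succ_le (hp₀ : 0 < p) (hp₁ : p ≤ 1) (n : ℕ) :
    binomialMean p n (fun m => ((m : ℝ) + 1)⁻¹) ≤ ((n + 1) * p)⁻¹ := by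
  have shift := binomialMean_succ_cast_mul p n fun m => (m : ℝ)⁻¹
  push_cast at shift
  have le_one : binomialMean p (n + 1) (fun m => m * (m : ℝ)⁻¹) ≤ 1 :=
    (binomialMean_mono hp₀.le hp₁ _ fun _ => mul_inv_le_one).trans_eq (binomialMean_one p _)
  rw [← one_div, le_div_iff₀' (by positivity), ← shift]
  exact le_one

theorem binomialMean_inv_succ_mul_le (hp₀ : 0 < p) (hp₁ : p ≤ 1) (n : ℕ) :
    binomialMean p n (fun m => (((m : ℝ) + 1) * (m + 2))⁻¹) ≤ ((n + 1) * p * ((n + 2) * p))⁻¹ := by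
  have shift := binomialMean_succ_cast_mul p n fun m => ((m : ℝ) * (m + 1))⁻¹
  push_cast at shift
  simp only [add_assoc, one_add_one_eq_two] at shift
  have le_inv : binomialMean p (n + 1) (fun m => m * ((m : ℝ) * (m + 1))⁻¹) ≤ ((n + 2) * p)⁻¹ := by
    calc binomialMean p (n + 1) (fun m => m * ((m : ℝ) * (m + 1))⁻¹)
        ≤ binomialMean p (n + 1) (fun m => ((m : ℝ) + 1)⁻¹) :=
          binomialMean_mono hp₀.le hp₁ _ fun m => by
            rw [mul_inv, ← mul_assoc]
            exact mul_le_of_le_one_left (by positivity) mul_inv_le_one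
      _ ≤ (((n + 1 : ℕ) + 1) * p)⁻¹ := binomialMean_inv_succ_le hp₀ hp₁ _
      _ = ((n + 2) * p)⁻¹ := by push_cast; ring
  rw [mul_inv, ← div_eq_inv_mul, le_div_iff₀' (by positivity), ← shift]
  exact le_inv

theorem binomialMean_inv_succ_le_inv_mean (hp₀ : 0 < p) (hp₁ : p ≤ 1) {n : ℕ} (hn : 0 < n) :
    binomialMean p n (fun m => ((m : ℝ) + 1)⁻¹) ≤ (n * p)⁻¹ :=
  (binomialMean_inv_succ_le hp₀ hp₁ n).trans (by gcongr; linarith)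

theorem binomialMean_sq_sub_mean_div_succ_le (hp₀ : 0 < p) (hp₁ : p ≤ 1) {n : ℕ} (hn : 0 < n) :
    binomialMean p n (fun m => ((m : ℝ) + 1 - n * p) ^ 2 / (m + 1)) ≤ 1 := by
  have E_inv := binomialMean_inv_succ_le_inv_mean hp₀ hp₁ hn
  have E_cast := binomialMean_cast p n
  have mean_pos : 0 < n * p := by positivity
  generalize (n : ℝ) * p = μ at E_inv E_cast mean_pos
  have expand : (fun m : ℕ => ((m : ℝ) + 1 - μ) ^ 2 / (m + 1)) =
      (fun m : ℕ => (m : ℝ)) + (1 - 2 * μ) • 1 + μ ^ 2 • fun m : ℕ => ((m : ℝ) + 1)⁻¹ := by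
    ext m
    simp only [Pi.add_apply, Pi.smul_apply, Pi.one_apply, smul_eq_mul]
    field_simp
    ring
  rw [expand]
  simp only [map_add, map_smul, smul_eq_mul, binomialMean_one, E_cast]
  calc μ + (1 - 2 * μ) * 1 + μ ^ 2 * binomialMean p n (fun m => ((m : ℝ) + 1)⁻¹)
      ≤ μ + (1 - 2 * μ) * 1 + μ ^ 2 * μ⁻¹ := by gcongr
    _ = 1 := by field_simp; ring

theorem abs_binomialMean_inv_sqrt_sub_le (hp₀ : 0 < p) (hp₁ : p ≤ 1) {n : ℕ} (hn : 0 < n) :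
    |binomialMean p n (fun m => (√((m : ℝ) + 1))⁻¹) - (√(n * p))⁻¹| ≤ 2 / √(n * p) ^ 3 := by
  have remainder_le := binomialMean_sq_sub_mean_div_succ_le hp₀ hp₁ hn
  have E_cast := binomialMean_cast p n
  have b_pos : 0 < √(n * p) := by positivity
  rw [← Real.sq_sqrt (show 0 ≤ n * p by positivity)] at remainder_le E_cast
  set b := √(n * p)
  have taylor := abs_binomialMean_le hp₀.le hp₁ n fun m : ℕ =>
    abs_inv_sub_inv_add_le (x := √((m : ℝ) + 1)) (by positivity) b_pos
  have sq_sqrt (m : ℕ) : √((m : ℝ) + 1) ^ 2 = m + 1 := Real.sq_sqrt (by positivity)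
  simp only [sq_sqrt] at taylor
  have approximation : (fun m : ℕ => (√((m : ℝ) + 1))⁻¹ - b⁻¹ + (m + 1 - b ^ 2) / (2 * b ^ 3)) =
      (fun m : ℕ => (√((m : ℝ) + 1))⁻¹) - b⁻¹ • 1 +
        (2 * b ^ 3)⁻¹ • ((fun m : ℕ => (m : ℝ)) + (1 - b ^ 2) • 1) := by
    ext m
    simp only [Pi.add_apply, Pi.sub_apply, Pi.smul_apply, Pi.one_apply, smul_eq_mul]
    ring
  have remainder : (fun m : ℕ => ((m : ℝ) + 1 - b ^ 2) ^ 2 / ((m + 1) * b ^ 3)) =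
      (b ^ 3)⁻¹ • fun m : ℕ => ((m : ℝ) + 1 - b ^ 2) ^ 2 / (m + 1) := by
    ext m
    rw [Pi.smul_apply, smul_eq_mul]
    field_simp
  rw [approximation, remainder] at taylor
  simp only [map_add, map_sub, map_smul, smul_eq_mul, binomialMean_one, E_cast] at taylor
  have shift : (2 * b ^ 3)⁻¹ * (b ^ 2 + (1 - b ^ 2) * 1) = (b ^ 3)⁻¹ / 2 := by
    field_simp
    ring
  have inv_pos : 0 < (b ^ 3)⁻¹ := by positivity
  have bounds := abs_le.1 (taylor.trans (mul_le_of_le_one_right inv_pos.le remainder_le))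
  rw [shift] at bounds
  rw [div_eq_mul_inv, abs_le]
  constructor <;> linarith

theorem binomialMean_inv_sqrt_pow_three_le (hp₀ : 0 < p) (hp₁ : p ≤ 1) {n : ℕ} (hn : 0 < n) :
    binomialMean p n (fun m => (√((m : ℝ) + 1) ^ 3)⁻¹) ≤ 3 / √(n * p) ^ 3 := by
  have E_inv := binomialMean_inv_succ_le_inv_mean hp₀ hp₁ hn
  have E_inv_mul : binomialMean p n (fun m => (((m : ℝ) + 1) * (m + 2))⁻¹) ≤ ((n * p) ^ 2)⁻¹ := by
    refine (binomialMean_inv_succ_mul_le hp₀ hp₁ n).trans ?_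
    rw [sq]
    gcongr <;> linarith
  have b_pos : 0 < √(n * p) := by positivity
  rw [← Real.sq_sqrt (show 0 ≤ n * p by positivity)] at E_inv E_inv_mul
  set b := √(n * p)
  calc binomialMean p n (fun m => (√((m : ℝ) + 1) ^ 3)⁻¹)
      ≤ binomialMean p n (b⁻¹ • ((fun m : ℕ => ((m : ℝ) + 1)⁻¹) +
          (2 * b ^ 2) • fun m : ℕ => (((m : ℝ) + 1) * (m + 2))⁻¹)) := by
        refine binomialMean_mono hp₀.le hp₁ n fun m => ?_
        have sq_sqrt : √((m : ℝ) + 1) ^ 2 = m + 1 := Real.sq_sqrt (by positivity)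
        have pow_four : √((m : ℝ) + 1) ^ 4 = (m + 1) ^ 2 := by
          rw [pow_mul _ 2 2, sq_sqrt]
        refine (inv_pow_three_le (by positivity) b_pos).trans ?_
        rw [sq_sqrt, pow_four]
        simp only [Pi.add_apply, Pi.smul_apply, smul_eq_mul, mul_comm 2 (b ^ 2), mul_assoc]
        gcongr
        rw [← div_eq_mul_inv, ← one_div, div_le_div_iff₀ (by positivity) (by positivity)]
        nlinarith [(m.cast_nonneg : (0 : ℝ) ≤ m)]
    _ ≤ b⁻¹ * ((b ^ 2)⁻¹ + 2 * b ^ 2 * ((b ^ 2) ^ 2)⁻¹) := by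
        simp only [map_add, map_smul, smul_eq_mul]
        gcongr
    _ = 3 / b ^ 3 := by
        field_simp
        ring

theorem abs_binomialMean_sub_le (hp₀ : 0 < p) (hp₁ : p ≤ 1) {a : ℕ → ℝ} {q K : ℝ}
    (ha : ∀ m : ℕ, |a m - q / √(m + 1)| ≤ K / √(m + 1) ^ 3) {n : ℕ} (hn : 0 < n) :
    |binomialMean p n a - q / √(n * p)| ≤ (3 * K + 2 * |q|) / √(n * p) ^ 3 := by
  have K_nonneg : 0 ≤ K := (abs_nonneg _).trans (by simpa using ha 0)
  have a_error : |binomialMean p n (a - q • fun m : ℕ => (√((m : ℝ) + 1))⁻¹)| ≤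
      K * (3 / √(n * p) ^ 3) := by
    calc |binomialMean p n (a - q • fun m : ℕ => (√((m : ℝ) + 1))⁻¹)|
        ≤ binomialMean p n (K • fun m : ℕ => (√((m : ℝ) + 1) ^ 3)⁻¹) :=
          abs_binomialMean_le hp₀.le hp₁ n ha
      _ ≤ K * (3 / √(n * p) ^ 3) := by
          rw [map_smul, smul_eq_mul]
          gcongr
          exact binomialMean_inv_sqrt_pow_three_le hp₀ hp₁ hn
  have q_error := mul_le_mul_of_nonneg_left (abs_binomialMean_inv_sqrt_sub_le hp₀ hp₁ hn)
    (abs_nonneg q)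
  rw [← abs_mul] at q_error
  rw [map_sub, map_smul, smul_eq_mul] at a_error
  calc |binomialMean p n a - q / √(n * p)|
      = |(binomialMean p n a - q * binomialMean p n fun m => (√((m : ℝ) + 1))⁻¹) +
          q * (binomialMean p n (fun m => (√((m : ℝ) + 1))⁻¹) - (√(n * p))⁻¹)| := by
        congr 1
        ring
    _ ≤ K * (3 / √(n * p) ^ 3) + |q| * (2 / √(n * p) ^ 3) :=
        (abs_add_le _ _).trans (add_le_add a_error q_error)
    _ = (3 * K + 2 * |q|) / √(n * p) ^ 3 := by ring

theorem sum_choose_mul_eq_binomialMean {x : ℝ} (hx : x ≠ 0) (hx' : 1 + x ≠ 0) (n : ℕ)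
    (a : ℕ → ℝ) :
    ∑ m ∈ range (n + 1), n.choose m * a m =
      (1 + x) ^ n * binomialMean (x / (1 + x)) n fun m => a m / x ^ m := by
  rw [binomialMean_apply, mul_sum]
  refine sum_congr rfl fun m hm => ?_
  have one_sub : 1 - x / (1 + x) = 1 / (1 + x) := by
    field_simp
    ring
  have split_pow : (1 + x) ^ n = (1 + x) ^ m * (1 + x) ^ (n - m) := by
    rw [← pow_add, Nat.add_sub_cancel' (mem_range_succ_iff.1 hm)]
  rw [one_sub, split_pow, div_pow, div_pow, one_pow]
  field_simp

end BinomialMean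

/-! ### Middle binomial coefficients -/

/-- The number of walks with `m` steps `±1` that start at `0` and stay nonnegative. -/
def middleChoose (m : ℕ) : ℕ := m.choose (m / 2)

/-- The increments of `middleChoose`, continued by `middleChoose (-1) = 0`. -/
def middleChooseDiff : ℕ → ℤ
  | 0 => 1
  | m + 1 => middleChoose (m + 1) - middleChoose m

theorem middleChoose_two_mul (k : ℕ) : middleChoose (2 * k) = k.centralBinom := by
  rw [middleChoose, Nat.centralBinom_eq_two_mul_choose, Nat.mul_div_cancel_left k two_pos]

theorem middleChoose_two_mul_add_one (k : ℕ) :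
    middleChoose (2 * k + 1) = (2 * k + 1).choose k := by
  rw [middleChoose, show (2 * k + 1) / 2 = k by omega]

theorem middleChoose_le_succ (m : ℕ) : middleChoose m ≤ middleChoose (m + 1) :=
  (Nat.choose_le_choose _ m.le_succ).trans (Nat.choose_le_middle _ _)

theorem middleChoose_le_two_pow (m : ℕ) : middleChoose m ≤ 2 ^ m := Nat.choose_le_two_pow _ _

theorem two_mul_middleChooseDiff_two_mul {k : ℕ} (hk : k ≠ 0) :
    2 * middleChooseDiff (2 * k) = k.centralBinom := by
  obtain ⟨j, rfl⟩ := Nat.exists_eq_succ_of_ne_zero hk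
  have pascal : (j + 1).centralBinom = 2 * (2 * j + 1).choose j := by
    rw [Nat.centralBinom_eq_two_mul_choose, Nat.mul_succ, Nat.choose_succ_succ,
      Nat.succ_eq_add_one, Nat.choose_symm_half, ← two_mul]
  have : middleChooseDiff (2 * (j + 1)) = middleChoose (2 * (j + 1)) - middleChoose (2 * j + 1) :=
    rfl
  rw [Nat.succ_eq_add_one, this, middleChoose_two_mul, middleChoose_two_mul_add_one, pascal]
  push_cast
  ring

theorem succ_mul_middleChooseDiff_two_mul_add_one (k : ℕ) :
    ((k : ℤ) + 1) * middleChooseDiff (2 * k + 1) = k * k.centralBinom := by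
  have absorb : k.centralBinom * (2 * k + 1) = (2 * k + 1).choose k * (k + 1) := by
    rw [Nat.centralBinom_eq_two_mul_choose, Nat.choose_mul_succ_eq,
      show 2 * k + 1 - k = k + 1 by omega]
  rw [middleChooseDiff, middleChoose_two_mul, middleChoose_two_mul_add_one]
  zify at absorb
  linear_combination -absorb

theorem centralBinom_div_four_pow_sq (k : ℕ) :
    ((k.centralBinom : ℝ) / 4 ^ k) ^ 2 = (Real.Wallis.W k * (2 * k + 1))⁻¹ := by
  have four_pow : (2 : ℝ) ^ (4 * k) = (4 ^ k) ^ 2 := by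
    rw [← pow_mul, mul_comm k 2, pow_mul 4 2 k, pow_mul]
    norm_num
  rw [Real.Wallis.W_eq_factorial_ratio, Nat.centralBinom_eq_two_mul_choose,
    Nat.cast_choose ℝ (show k ≤ 2 * k by omega), show 2 * k - k = k by omega, four_pow]
  field_simp

theorem two_div_pi_mul_le_centralBinom_sq (k : ℕ) :
    2 / (Real.pi * (2 * k + 1)) ≤ ((k.centralBinom : ℝ) / 4 ^ k) ^ 2 := by
  have W_pos := Real.Wallis.W_pos k
  calc 2 / (Real.pi * (2 * k + 1)) = (Real.pi / 2 * (2 * k + 1))⁻¹ := by field_simp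
    _ ≤ (Real.Wallis.W k * (2 * k + 1))⁻¹ := by
        gcongr
        exact Real.Wallis.W_le k
    _ = _ := (centralBinom_div_four_pow_sq k).symm

theorem centralBinom_sq_le_two_div_pi_mul (k : ℕ) :
    ((k.centralBinom : ℝ) / 4 ^ k) ^ 2 ≤ 2 / Real.pi * ((2 * k + 2) / (2 * k + 1) ^ 2) := by
  calc ((k.centralBinom : ℝ) / 4 ^ k) ^ 2 = (Real.Wallis.W k * (2 * k + 1))⁻¹ :=
        centralBinom_div_four_pow_sq k
    _ ≤ ((2 * k + 1) / (2 * k + 2) * (Real.pi / 2) * (2 * k + 1))⁻¹ := by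
        gcongr
        exact Real.Wallis.le_W k
    _ = _ := by field_simp

theorem abs_middleChooseDiff_two_mul_sq_sub_le {k : ℕ} (hk : k ≠ 0) :
    |((middleChooseDiff (2 * k) : ℝ) / 2 ^ (2 * k)) ^ 2 - 1 / (2 * Real.pi * (2 * k + 1))| ≤
      1 / (2 * (k : ℝ) + 1) ^ 2 := by
  have diff_eq : (middleChooseDiff (2 * k) : ℝ) / 2 ^ (2 * k) = k.centralBinom / 4 ^ k / 2 := by
    have : 2 * (middleChooseDiff (2 * k) : ℝ) = k.centralBinom :=
      mod_cast two_mul_middleChooseDiff_two_mul hk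
    rw [← this, pow_mul]
    norm_num
    ring
  have lower := two_div_pi_mul_le_centralBinom_sq k
  have upper := centralBinom_sq_le_two_div_pi_mul k
  rw [diff_eq, div_pow _ 2]
  generalize ((k.centralBinom : ℝ) / 4 ^ k) ^ 2 = c at lower upper
  have main_term : 2 / (Real.pi * (2 * k + 1)) = 4 * (1 / (2 * Real.pi * (2 * k + 1))) := by
    field_simp
    norm_num
  have upper_eq : 2 / Real.pi * ((2 * k + 2) / (2 * k + 1) ^ 2) =
      4 * (1 / (2 * Real.pi * (2 * k + 1)) + 1 / (2 * Real.pi) * (1 / (2 * k + 1) ^ 2)) := by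
    field_simp
    ring
  have : 1 / (2 * Real.pi) * (1 / (2 * (k : ℝ) + 1) ^ 2) ≤ 1 / (2 * k + 1) ^ 2 := by
    refine mul_le_of_le_one_left (by positivity) ?_
    rw [div_le_one (by positivity)]
    linarith [Real.two_le_pi]
  have : 0 < 1 / (2 * (k : ℝ) + 1) ^ 2 := by positivity
  rw [abs_le]
  constructor <;> linarith

theorem abs_middleChooseDiff_two_mul_add_one_sq_sub_le (k : ℕ) :
    |((middleChooseDiff (2 * k + 1) : ℝ) / 2 ^ (2 * k + 1)) ^ 2 -
      1 / (2 * Real.pi * (2 * k + 2))| ≤ 1 / (2 * (k : ℝ) + 2) ^ 2 := by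
  have diff_eq : (middleChooseDiff (2 * k + 1) : ℝ) / 2 ^ (2 * k + 1) =
      k.centralBinom / 4 ^ k * (k / (2 * k + 2)) := by
    have : ((k : ℝ) + 1) * middleChooseDiff (2 * k + 1) = k * k.centralBinom :=
      mod_cast succ_mul_middleChooseDiff_two_mul_add_one k
    rw [pow_succ, pow_mul, show (2 : ℝ) ^ 2 = 4 by norm_num]
    field_simp
    linear_combination this
  have lower := two_div_pi_mul_le_centralBinom_sq k
  have upper := centralBinom_sq_le_two_div_pi_mul k
  rw [diff_eq, mul_pow]
  generalize ((k.centralBinom : ℝ) / 4 ^ k) ^ 2 = c at lower upper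
  have lower_gap : 2 / (Real.pi * (2 * k + 1)) * (k / (2 * k + 2)) ^ 2 -
      (1 / (2 * Real.pi * (2 * k + 2)) - 1 / (2 * (k : ℝ) + 2) ^ 2) =
        ((Real.pi - 2) * (2 * k + 1) + (k + 1)) / (Real.pi * (2 * k + 1) * (2 * k + 2) ^ 2) := by
    field_simp
    ring
  have upper_gap : 1 / (2 * Real.pi * (2 * k + 2)) -
      2 / Real.pi * ((2 * k + 2) / (2 * k + 1) ^ 2) * ((k : ℝ) / (2 * k + 2)) ^ 2 =
        (4 * k + 1) / (2 * Real.pi * (2 * k + 1) ^ 2 * (2 * k + 2)) := by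
    field_simp
    ring
  have : 0 ≤ Real.pi - 2 := sub_nonneg.2 Real.two_le_pi
  have : 0 ≤ ((Real.pi - 2) * (2 * k + 1) + (k + 1)) /
      (Real.pi * (2 * k + 1) * (2 * (k : ℝ) + 2) ^ 2) := by
    positivity
  have : 0 ≤ (4 * k + 1) / (2 * Real.pi * (2 * k + 1) ^ 2 * (2 * (k : ℝ) + 2)) := by positivity
  have := mul_le_mul_of_nonneg_right lower (sq_nonneg ((k : ℝ) / (2 * k + 2)))
  have := mul_le_mul_of_nonneg_right upper (sq_nonneg ((k : ℝ) / (2 * k + 2)))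
  have : 0 < 1 / (2 * (k : ℝ) + 2) ^ 2 := by positivity
  rw [abs_le]
  constructor <;> linarith

theorem abs_middleChooseDiff_sq_sub_le (m : ℕ) :
    |((middleChooseDiff m : ℝ) / 2 ^ m) ^ 2 - 1 / (2 * Real.pi * (m + 1))| ≤
      1 / ((m : ℝ) + 1) ^ 2 := by
  rcases eq_or_ne m 0 with rfl | hm
  · have : 1 / (2 * Real.pi) ≤ 1 := by
      rw [div_le_one (by positivity)]
      linarith [Real.two_le_pi]
    have : 0 < 1 / (2 * Real.pi) := by positivity
    simp only [middleChooseDiff, Int.cast_one, pow_zero, div_one, one_pow, Nat.cast_zero, zero_add,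
      mul_one]
    rw [abs_le]
    constructor <;> linarith
  rcases m.even_or_odd' with ⟨k, rfl | rfl⟩
  · exact_mod_cast abs_middleChooseDiff_two_mul_sq_sub_le (by omega : k ≠ 0)
  · convert abs_middleChooseDiff_two_mul_add_one_sq_sub_le k using 3 <;> push_cast <;> ring

theorem middleChooseDiff_nonneg (m : ℕ) : 0 ≤ middleChooseDiff m := by
  cases m with
  | zero => exact zero_le_one
  | succ m => exact sub_nonneg.2 (mod_cast middleChoose_le_succ m)

theorem abs_sub_le_abs_sq_sub_div {x y : ℝ} (hx : 0 ≤ x) (hy : 0 < y) :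
    |x - y| ≤ |x ^ 2 - y ^ 2| / y := by
  rw [le_div_iff₀ hy, sq_sub_sq, abs_mul, mul_comm, abs_of_pos (by positivity : 0 < x + y)]
  gcongr
  linarith

theorem abs_middleChooseDiff_sub_le (m : ℕ) :
    |(middleChooseDiff m : ℝ) / 2 ^ m - (√(2 * Real.pi))⁻¹ / √(m + 1)| ≤
      √(2 * Real.pi) / √(m + 1) ^ 3 := by
  have diff_nonneg : 0 ≤ (middleChooseDiff m : ℝ) / 2 ^ m :=
    div_nonneg (mod_cast middleChooseDiff_nonneg m) (by positivity)
  have sq_sqrt : √((m : ℝ) + 1) ^ 2 = m + 1 := Real.sq_sqrt (by positivity)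
  have main_term_sq : ((√(2 * Real.pi))⁻¹ / √((m : ℝ) + 1)) ^ 2 = 1 / (2 * Real.pi * (m + 1)) := by
    rw [div_pow, inv_pow, sq_sqrt, Real.sq_sqrt (by positivity)]
    field_simp
  calc _ ≤ |((middleChooseDiff m : ℝ) / 2 ^ m) ^ 2 - 1 / (2 * Real.pi * (m + 1))| /
        ((√(2 * Real.pi))⁻¹ / √(m + 1)) := by
        rw [← main_term_sq]
        exact abs_sub_le_abs_sq_sub_div diff_nonneg (by positivity)
    _ ≤ 1 / ((m : ℝ) + 1) ^ 2 / ((√(2 * Real.pi))⁻¹ / √(m + 1)) := by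
        gcongr
        exact abs_middleChooseDiff_sq_sub_le m
    _ = √(2 * Real.pi) / √(m + 1) ^ 3 := by
        have pow_four : √((m : ℝ) + 1) ^ 4 = (m + 1) ^ 2 := by
          rw [pow_mul _ 2 2, sq_sqrt]
        rw [← pow_four]
        field_simp

/-! ### Asymptotics -/

theorem imageTerm_origin (n m : ℕ) :
    imageTerm n m 0 0 = (if n ≤ 2 * m then (middleChoose m : ℤ) else 0) -
      if n + 2 ≤ 2 * m then (middleChoose (m - 1) : ℤ) else 0 := by
  have toNat_eq : ((m : ℤ) - 0 - 1).toNat = m - 1 := by omega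
  simp only [imageTerm, halfLineCount_origin, toNat_eq]
  norm_cast

theorem imageTerm_origin_eq_middleChooseDiff {n m : ℕ} (h : n + 2 ≤ 2 * m) :
    imageTerm n m 0 0 = middleChooseDiff m := by
  obtain ⟨k, rfl⟩ := Nat.exists_eq_succ_of_ne_zero (show m ≠ 0 by omega)
  rw [imageTerm_origin, if_pos (by omega), if_pos h]
  rfl

theorem abs_imageTerm_origin_sub_middleChooseDiff_le (n m : ℕ) :
    |imageTerm n m 0 0 - middleChooseDiff m| ≤ 2 ^ m := by
  rcases le_or_gt (n + 2) (2 * m) with h | h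
  · rw [imageTerm_origin_eq_middleChooseDiff h, sub_self, abs_zero]
    positivity
  rw [imageTerm_origin, if_neg (c := n + 2 ≤ 2 * m) (by omega), sub_zero]
  cases m with
  | zero => simp only [middleChoose, middleChooseDiff]; split_ifs <;> simp
  | succ m =>
    have mono : (middleChoose m : ℤ) ≤ middleChoose (m + 1) := mod_cast middleChoose_le_succ m
    have le_pow : (middleChoose (m + 1) : ℤ) ≤ 2 ^ (m + 1) := mod_cast middleChoose_le_two_pow _
    rw [middleChooseDiff, abs_le]
    constructor <;> split_ifs <;> omega

theorem abs_imageTerm_origin_sub_middleChooseDiff_le_sqrt_two_pow (n m : ℕ) :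
    |(imageTerm n m 0 0 : ℝ) - middleChooseDiff m| ≤ √2 ^ (n + 1) := by
  rcases le_or_gt (n + 2) (2 * m) with h | h
  · rw [imageTerm_origin_eq_middleChooseDiff h, sub_self, abs_zero]
    positivity
  calc |(imageTerm n m 0 0 : ℝ) - middleChooseDiff m|
      ≤ 2 ^ m := mod_cast abs_imageTerm_origin_sub_middleChooseDiff_le n m
    _ = √2 ^ (2 * m) := by rw [pow_mul, Real.sq_sqrt zero_le_two]
    _ ≤ √2 ^ (n + 1) := pow_le_pow_right₀ Real.one_lt_sqrt_two.le (by omega)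

theorem abs_walkCount_sub_binomialMean_le (n : ℕ) :
    |(walkCount 2 stepsNENWS n : ℝ) -
      3 ^ n * binomialMean (2 / 3) n (fun m => middleChooseDiff m / 2 ^ m)| ≤
        2 ^ n * √2 ^ (n + 1) := by
  have enumeration : (walkCount 2 stepsNENWS n : ℝ) =
      ∑ m ∈ range (n + 1), n.choose m * (imageTerm n m 0 0 : ℝ) :=
    mod_cast walkCount_stepsNENWS n
  have normalized := sum_choose_mul_eq_binomialMean (x := 2) two_ne_zero (by norm_num) n
    fun m => middleChooseDiff m
  rw [show (1 : ℝ) + 2 = 3 by norm_num] at normalized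
  rw [enumeration, ← normalized, ← sum_sub_distrib]
  calc |∑ m ∈ range (n + 1), (n.choose m * (imageTerm n m 0 0 : ℝ) -
        n.choose m * middleChooseDiff m)|
      ≤ ∑ m ∈ range (n + 1), n.choose m * √2 ^ (n + 1) := by
        refine (abs_sum_le_sum_abs _ _).trans (sum_le_sum fun m _ => ?_)
        rw [← mul_sub, abs_mul, Nat.abs_cast]
        gcongr
        exact abs_imageTerm_origin_sub_middleChooseDiff_le_sqrt_two_pow n m
    _ = 2 ^ n * √2 ^ (n + 1) := by
        rw [← sum_mul, ← Nat.cast_sum, Nat.sum_range_choose, Nat.cast_pow, Nat.cast_ofNat]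

section

open Asymptotics Filter

theorem isBigO_sqrt_mul_binomialMean_sub :
    (fun n : ℕ => √n * binomialMean (2 / 3) n (fun m => middleChooseDiff m / 2 ^ m) -
      √3 / (2 * √Real.pi)) =O[atTop] fun n : ℕ => (n : ℝ)⁻¹ := by
  set K := 3 * √(2 * Real.pi) + 2 * |(√(2 * Real.pi))⁻¹|
  refine IsBigO.of_bound (K / √(2 / 3) ^ 3) ((eventually_gt_atTop 0).mono fun n hn => ?_)
  have sq_sqrt_n : √(n : ℝ) ^ 2 = n := Real.sq_sqrt n.cast_nonneg
  have sqrt_mean : √(n * (2 / 3)) = √n * √(2 / 3) := Real.sqrt_mul n.cast_nonneg _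
  have main_term : √n * ((√(2 * Real.pi))⁻¹ / √(n * (2 / 3))) = √3 / (2 * √Real.pi) := by
    rw [Real.sqrt_mul zero_le_two, sqrt_mean, Real.sqrt_div zero_le_two]
    field_simp
    rw [Real.sq_sqrt zero_le_two]
  have transfer := abs_binomialMean_sub_le (p := 2 / 3) (by norm_num) (by norm_num)
    abs_middleChooseDiff_sub_le hn
  rw [← main_term, ← mul_sub, Real.norm_eq_abs, abs_mul, abs_of_nonneg (Real.sqrt_nonneg _)]
  calc _ ≤ √n * (K / √(n * (2 / 3)) ^ 3) := by gcongr
    _ = K / √(2 / 3) ^ 3 * (√n ^ 2)⁻¹ := by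
        rw [sqrt_mean]
        field_simp
    _ = K / √(2 / 3) ^ 3 * ‖(n : ℝ)⁻¹‖ := by rw [sq_sqrt_n, norm_inv, Real.norm_natCast]

theorem isBigO_sqrt_mul_const_pow {r : ℝ} (hr₀ : 0 ≤ r) (hr₁ : r < 1) :
    (fun n : ℕ => √n * r ^ n) =O[atTop] fun n : ℕ => (n : ℝ)⁻¹ := by
  have sq_mul_pow := (tendsto_pow_const_mul_const_pow_of_lt_one 2 hr₀ hr₁).isBigO_one ℝ
  refine .trans (.of_norm_eventuallyLE ((eventually_gt_atTop 0).mono fun n hn => ?_))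
    ((sq_mul_pow.mul (isBigO_refl (fun n : ℕ => (n : ℝ)⁻¹) atTop)).congr_right fun n => one_mul _)
  have one_le : (1 : ℝ) ≤ n := mod_cast hn
  beta_reduce
  rw [Real.norm_of_nonneg (by positivity)]
  calc √n * r ^ n ≤ n * r ^ n := by
        gcongr
        exact Real.sqrt_le_self_iff.2 (.inr one_le)
    _ = n ^ 2 * r ^ n * (n : ℝ)⁻¹ := by field_simp

theorem isBigO_sqrt_mul_walkCount_sub_binomialMean :
    (fun n : ℕ => √n * ((walkCount 2 stepsNENWS n : ℝ) / 3 ^ n -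
      binomialMean (2 / 3) n fun m => middleChooseDiff m / 2 ^ m)) =O[atTop]
        fun n : ℕ => (n : ℝ)⁻¹ := by
  have ratio_lt_one : 2 * √2 / 3 < 1 := by
    rw [div_lt_one three_pos]
    nlinarith [Real.sq_sqrt zero_le_two]
  refine .trans (.of_bound √2 (.of_forall fun n => ?_))
    (isBigO_sqrt_mul_const_pow (by positivity) ratio_lt_one)
  have three_pow_pos : (0 : ℝ) < 3 ^ n := by positivity
  rw [norm_mul, norm_mul, mul_left_comm]
  gcongr
  rw [Real.norm_of_nonneg (show 0 ≤ (2 * √2 / 3) ^ n by positivity), Real.norm_eq_abs,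
    ← mul_div_cancel_left₀ (binomialMean (2 / 3) n _) three_pow_pos.ne', ← sub_div, abs_div,
    abs_of_pos three_pow_pos]
  calc _ ≤ 2 ^ n * √2 ^ (n + 1) / 3 ^ n := by
        gcongr
        exact abs_walkCount_sub_binomialMean_le n
    _ = √2 * (2 * √2 / 3) ^ n := by
        rw [div_pow, mul_pow]
        ring

theorem isBigO_sqrt_mul_walkCount_sub :
    (fun n : ℕ => √n * ((walkCount 2 stepsNENWS n : ℝ) / 3 ^ n) - √3 / (2 * √Real.pi)) =O[atTop]
      fun n : ℕ => (n : ℝ)⁻¹ :=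
  (isBigO_sqrt_mul_walkCount_sub_binomialMean.add isBigO_sqrt_mul_binomialMean_sub).congr_left
    fun n => by ring

end

theorem asymptotics_NE_NW_S :
    ∃ c : ℝ, 0 < c ∧ ∀ n : ℕ, 1 ≤ n →
      |(walkCount 2 {![1, 1], ![-1, 1], ![0, -1]} n : ℝ) * (3 : ℝ) ^ (-(n : ℤ))
          * (n : ℝ) ^ ((1 : ℝ) / 2)
        - Real.sqrt 3 / (2 * Real.sqrt Real.pi)|
      ≤ c / n := by
  obtain ⟨c, c_pos, hc⟩ := Asymptotics.bound_of_isBigO_nat_atTop isBigO_sqrt_mul_walkCount_sub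
  refine ⟨c, c_pos, fun n hn => ?_⟩
  have inv_ne_zero : (n : ℝ)⁻¹ ≠ 0 := inv_ne_zero (mod_cast (by omega : n ≠ 0))
  calc _ = ‖√n * ((walkCount 2 stepsNENWS n : ℝ) / 3 ^ n) - √3 / (2 * √Real.pi)‖ := by
        rw [← coe_stepsNENWS, ← Real.sqrt_eq_rpow, zpow_neg, zpow_natCast, ← div_eq_mul_inv,
          mul_comm, Real.norm_eq_abs]
    _ ≤ c * ‖(n : ℝ)⁻¹‖ := hc inv_ne_zero
    _ = c / n := by rw [norm_inv, Real.norm_natCast, div_eq_mul_inv]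
end

section
/- Let s_n be the number of walks of length n with steps in {(1,0),(1,−1),(−1,0),(−1,1)} (the model E, SE, W, NW), beginning at the origin and confined to ℕ². Then there is a constant c > 0 such that for all n ≥ 1, | s_n · 4^{−n} · n² − 8/π | ≤ c/n; that is, s_n = 4^n n^{−2}·(8/π) + O(4^n n^{−3}). -/
open Finset

/-!
In the coordinates `(U, V) = (i + 2 * j + 3, i + 1)` the four steps become `(±1, ±1)` and the
quadrant becomes the Weyl chamber `0 < V < U`. A walk is therefore a pair of independent `±1` walks
on the line, and the reflection principle (in the form of Karlin and McGregor) counts the walks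
between two points of the chamber by a `2 × 2` determinant. For the origin, the starting point is
`(3, 1)`, and the sum of this determinant over all endpoints telescopes twice, leaving four products
of binomial coefficients. They combine to `(2 * k + 1) * catalan k ^ 2` for `n = 2 * k` and to
`(k + 2) * catalan (k + 1) ^ 2 / 2` for `n = 2 * k + 1`; the Wallis product then gives the
asymptotics together with the error term.
-/

section OrthantWalks

variable {d : ℕ}

/-- `u` is the step sequence of a walk with steps in `S` which starts at `x` and stays in the
non-negative orthant; the starting point is also required to lie in the orthant. -/
def IsOrthantWalk (S : Set (Fin d → ℤ)) (x : Fin d → ℤ) {n : ℕ} (u : Fin n → Fin d → ℤ) : Prop :=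
  (∀ k, u k ∈ S) ∧ 0 ≤ x ∧ ∀ k, 0 ≤ x + ∑ j ∈ Iic k, u j

/-- The number of walks of length `n` with steps in `S` which start at `x` and stay in the
non-negative orthant. It is `0` when `x` itself is outside, so that the orthant constraint becomes
a boundary condition. -/
noncomputable def walkCountFrom (S : Set (Fin d → ℤ)) (n : ℕ) (x : Fin d → ℤ) : ℕ :=
  Nat.card {u : Fin n → Fin d → ℤ // IsOrthantWalk S x u}

theorem walkCount_eq_walkCountFrom_zero (S : Set (Fin d → ℤ)) (n : ℕ) :
    walkCount d S n = walkCountFrom S n 0 :=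
  Nat.card_congr <| Equiv.subtypeEquivRight fun u => by
    simp [IsOrthantWalk, Pi.le_def]

theorem isOrthantWalk_cons {S : Set (Fin d → ℤ)} {x s : Fin d → ℤ} {n : ℕ}
    {u : Fin n → Fin d → ℤ} :
    IsOrthantWalk S x (Fin.cons s u : Fin (n + 1) → Fin d → ℤ) ↔
      s ∈ S ∧ 0 ≤ x ∧ IsOrthantWalk S (x + s) u := by
  have first_sum : ∑ j ∈ Iic (0 : Fin (n + 1)), (Fin.cons s u : Fin (n + 1) → Fin d → ℤ) j = s := by
    rw [show Iic (0 : Fin (n + 1)) = {0} from Iic_bot]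
    simp
  have later_sum (k : Fin n) :
      ∑ j ∈ Iic k.succ, (Fin.cons s u : Fin (n + 1) → Fin d → ℤ) j = s + ∑ j ∈ Iic k, u j := by
    rw [← Icc_bot, Icc_eq_cons_Ioc bot_le, sum_cons, bot_eq_zero, ← Fin.map_succEmb_Iic,
      sum_map]
    simp
  simp only [IsOrthantWalk, Fin.forall_fin_succ, first_sum, later_sum, Fin.cons_zero,
    Fin.cons_succ, add_assoc]
  tauto

theorem finite_isOrthantWalk (S : Finset (Fin d → ℤ)) (n : ℕ) (x : Fin d → ℤ) :
    Finite {u : Fin n → Fin d → ℤ // IsOrthantWalk S x u} :=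
  ((Set.Finite.pi' fun _ => S.finite_toSet).subset fun _ hu => hu.1).to_subtype

/-- Splitting off the first step of a walk. -/
def orthantWalkSuccEquiv (S : Set (Fin d → ℤ)) (n : ℕ) {x : Fin d → ℤ} (hx : 0 ≤ x) :
    {u : Fin (n + 1) → Fin d → ℤ // IsOrthantWalk S x u} ≃
      Σ s : S, {u : Fin n → Fin d → ℤ // IsOrthantWalk S (x + s) u} where
  toFun u :=
    have h := isOrthantWalk_cons.1 ((Fin.cons_self_tail u.1).symm ▸ u.2)
    ⟨⟨u.1 0, h.1⟩, ⟨Fin.tail u.1, h.2.2⟩⟩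
  invFun p := ⟨Fin.cons p.1.1 p.2.1, isOrthantWalk_cons.2 ⟨p.1.2, hx, p.2.2⟩⟩
  left_inv u := Subtype.ext (Fin.cons_self_tail u.1)
  right_inv _ := rfl

theorem walkCountFrom_of_not_nonneg (S : Set (Fin d → ℤ)) (n : ℕ) {x : Fin d → ℤ}
    (hx : ¬0 ≤ x) : walkCountFrom S n x = 0 :=
  haveI : IsEmpty {u : Fin n → Fin d → ℤ // IsOrthantWalk S x u} := ⟨fun u => hx u.2.2.1⟩
  Nat.card_of_isEmpty

theorem walkCountFrom_zero (S : Set (Fin d → ℤ)) {x : Fin d → ℤ} (hx : 0 ≤ x) :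
    walkCountFrom S 0 x = 1 := by
  simp [walkCountFrom, IsOrthantWalk, hx]

theorem walkCountFrom_succ (S : Finset (Fin d → ℤ)) (n : ℕ) {x : Fin d → ℤ} (hx : 0 ≤ x) :
    walkCountFrom (S : Set (Fin d → ℤ)) (n + 1) x = ∑ s ∈ S, walkCountFrom S n (x + s) := by
  have := fun s : S => finite_isOrthantWalk S n (x + s.1)
  calc walkCountFrom (S : Set (Fin d → ℤ)) (n + 1) x
      = Nat.card (Σ s : S, {u : Fin n → Fin d → ℤ // IsOrthantWalk S (x + s.1) u}) :=
        Nat.card_congr (orthantWalkSuccEquiv S n hx)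
    _ = ∑ s : S, walkCountFrom S n (x + s.1) := Nat.card_sigma
    _ = ∑ s ∈ S, walkCountFrom S n (x + s) := sum_coe_sort S fun s => walkCountFrom S n (x + s)

end OrthantWalks

section LineWalks

/-- The number of walks of length `n` on `ℤ` with steps `±1` from `0` to `x`. -/
def lineWalks : ℕ → ℤ → ℤ
  | 0, x => if x = 0 then 1 else 0
  | n + 1, x => lineWalks n (x - 1) + lineWalks n (x + 1)

theorem lineWalks_eq_zero_of_lt_abs {n : ℕ} {x : ℤ} (h : n < |x|) : lineWalks n x = 0 := by
  induction n generalizing x with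
  | zero => exact if_neg (by simpa using h)
  | succ n ih =>
    push_cast at h
    rw [lineWalks, ih (by grind), ih (by grind), add_zero]

theorem lineWalks_eq_zero_of_odd {n : ℕ} {x : ℤ} (h : Odd (x + n)) : lineWalks n x = 0 := by
  induction n generalizing x with
  | zero => exact if_neg (by rintro rfl; simp at h)
  | succ n ih =>
    push_cast at h
    rw [lineWalks, ih (by grind), ih (by grind), add_zero]

theorem lineWalks_neg (n : ℕ) (x : ℤ) : lineWalks n (-x) = lineWalks n x := by
  induction n generalizing x with
  | zero => simp [lineWalks]
  | succ n ih =>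
    rw [lineWalks, lineWalks, ← ih (x - 1), ← ih (x + 1), add_comm]
    congr 2 <;> ring

theorem lineWalks_two_mul_sub (n j : ℕ) : lineWalks n (2 * j - n) = n.choose j := by
  induction n generalizing j with
  | zero => cases j <;> simp [lineWalks]; omega
  | succ n ih =>
    have right_term : lineWalks n (2 * j - (n + 1 : ℕ) + 1) = n.choose j := by
      rw [← ih j]
      congr 1
      push_cast
      ring
    rw [lineWalks, right_term]
    cases j with
    | zero => rw [lineWalks_eq_zero_of_lt_abs (by grind)]; simp
    | succ j =>
      rw [Nat.choose_succ_succ', Nat.cast_add (n.choose j), ← ih j]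
      congr 2
      push_cast
      ring

/-- The number of walks of length `n` with steps `±1` from `s` to `x` which stay positive, for
positive `s` and `x`, according to the reflection principle. -/
def reflectedLineWalks (n : ℕ) (s x : ℤ) : ℤ :=
  lineWalks n (x - s) - lineWalks n (x + s)

theorem reflectedLineWalks_zero {s x : ℤ} (hs : 0 < s) (hx : 0 < x) :
    reflectedLineWalks 0 s x = if x = s then 1 else 0 := by
  simp only [reflectedLineWalks, lineWalks, sub_eq_zero]
  rw [if_neg (show x + s ≠ 0 by omega), sub_zero]

theorem reflectedLineWalks_succ (n : ℕ) (s x : ℤ) :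
    reflectedLineWalks (n + 1) s x =
      reflectedLineWalks n (s - 1) x + reflectedLineWalks n (s + 1) x := by
  simp only [reflectedLineWalks, lineWalks]
  ring_nf

theorem sum_range_reflectedLineWalks {n N s : ℕ} {y : ℤ} (h : n + s < y + 2 * N + 2) :
    ∑ q ∈ range N, reflectedLineWalks n s (y + 2 * (q + 1)) =
      ∑ j ∈ range s, lineWalks n (y + 2 * (j + 1) - s) := by
  set f : ℕ → ℤ := fun q => lineWalks n (y + 2 * (q + 1) - s) with f_def
  have shift (q : ℕ) : reflectedLineWalks n s (y + 2 * (q + 1)) = f q - f (s + q) := by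
    simp only [reflectedLineWalks, f_def]
    push_cast
    ring_nf
  have tail : ∑ j ∈ range s, f (N + j) = 0 :=
    sum_eq_zero fun j _ => lineWalks_eq_zero_of_lt_abs (by grind)
  have split : ∑ q ∈ range N, f q + ∑ j ∈ range s, f (N + j) =
      ∑ j ∈ range s, f j + ∑ q ∈ range N, f (s + q) := by
    rw [← sum_range_add, ← sum_range_add, add_comm]
  simp only [shift, sum_sub_distrib]
  linarith

end LineWalks

section OctantWalks

/-- The Karlin–McGregor determinant: the number of walks of length `n` with steps `(±1, ±1)` from
`(U, V)` to `(x, y)` inside the chamber `0 < V < U`, for two points of the chamber. -/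
def octantKernel (n : ℕ) (U V x y : ℤ) : ℤ :=
  reflectedLineWalks n U x * reflectedLineWalks n V y -
    reflectedLineWalks n V x * reflectedLineWalks n U y

theorem octantKernel_self (n : ℕ) (U x y : ℤ) : octantKernel n U U x y = 0 :=
  sub_self _

theorem octantKernel_zero_right (n : ℕ) (U x y : ℤ) : octantKernel n U 0 x y = 0 := by
  simp [octantKernel, reflectedLineWalks]

theorem octantKernel_zero {U V x y : ℤ} (hV : 0 < V) (hVU : V < U) (hy : 0 < y) (hyx : y < x) :
    octantKernel 0 U V x y = if x = U ∧ y = V then 1 else 0 := by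
  rw [octantKernel, reflectedLineWalks_zero, reflectedLineWalks_zero, reflectedLineWalks_zero,
    reflectedLineWalks_zero] <;> grind

theorem octantKernel_succ (n : ℕ) (U V x y : ℤ) :
    octantKernel (n + 1) U V x y =
      octantKernel n (U + 1) (V + 1) x y + octantKernel n (U - 1) (V + 1) x y +
        octantKernel n (U - 1) (V - 1) x y + octantKernel n (U + 1) (V - 1) x y := by
  simp only [octantKernel, reflectedLineWalks_succ]
  ring

/-- The number of walks of length `n` with steps `(±1, ±1)` in the chamber `0 < V < U` which start
at `(U, V)`, with `U - V` even. The endpoints `(r + 2 * q + 3, r + 1)` correspond to the points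
`(r, q)` of the quadrant; they are truncated to `r, q < N` to keep the sum finite. -/
def octantWalks (N n : ℕ) (U V : ℤ) : ℤ :=
  ∑ r ∈ range N, ∑ q ∈ range N, octantKernel n U V (r + 1 + 2 * (q + 1)) (r + 1)

theorem octantWalks_self (N n : ℕ) (U : ℤ) : octantWalks N n U U = 0 := by
  simp [octantWalks, octantKernel_self]

theorem octantWalks_zero_right (N n : ℕ) (U : ℤ) : octantWalks N n U 0 = 0 := by
  simp [octantWalks, octantKernel_zero_right]

theorem octantWalks_zero {N i j : ℕ} (hi : i < N) (hj : j < N) :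
    octantWalks N 0 (i + 2 * j + 3) (i + 1) = 1 := by
  have kernel_eq (r q : ℕ) :
      octantKernel 0 (i + 2 * j + 3) (i + 1) (r + 1 + 2 * (q + 1)) (r + 1) =
        if r = i then if q = j then 1 else 0 else 0 := by
    rw [octantKernel_zero (by omega) (by omega) (by omega) (by omega), ← ite_and]
    exact if_congr (by omega) rfl rfl
  simp [octantWalks, kernel_eq, hi, hj]

theorem octantWalks_succ (N n : ℕ) (U V : ℤ) :
    octantWalks N (n + 1) U V =
      octantWalks N n (U + 1) (V + 1) + octantWalks N n (U - 1) (V + 1) +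
        octantWalks N n (U - 1) (V - 1) + octantWalks N n (U + 1) (V - 1) := by
  simp only [octantWalks, octantKernel_succ, sum_add_distrib]

theorem sum_range_octantKernel_three_one {N n : ℕ} (hN : n < N) (r : ℕ) :
    ∑ q ∈ range N, octantKernel n 3 1 (r + 1 + 2 * (q + 1)) (r + 1) =
      (lineWalks n r + lineWalks n (r + 2) + lineWalks n (r + 4)) *
          (lineWalks n r - lineWalks n (r + 2)) -
        lineWalks n (r + 2) * (lineWalks n (r - 2) - lineWalks n (r + 4)) := by
  have sum_one := sum_range_reflectedLineWalks (n := n) (N := N) (s := 1) (y := r + 1) (by omega)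
  have sum_three := sum_range_reflectedLineWalks (n := n) (N := N) (s := 3) (y := r + 1) (by omega)
  simp only [octantKernel, sum_sub_distrib, ← sum_mul]
  push_cast at sum_one sum_three
  rw [sum_one, sum_three]
  simp only [sum_range_succ, range_zero, sum_empty, reflectedLineWalks]
  push_cast
  ring_nf

theorem octantWalks_three_one {N n : ℕ} (hN : n < N) :
    octantWalks N n 3 1 =
      lineWalks n 0 ^ 2 - lineWalks n 2 ^ 2 +
        (lineWalks n 1 ^ 2 - lineWalks n 3 * lineWalks n 1) := by
  set φ : ℕ → ℤ := fun r =>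
    (lineWalks n r ^ 2 - lineWalks n (r + 2) * lineWalks n (r - 2)) +
      (lineWalks n (r + 1) ^ 2 - lineWalks n (r + 3) * lineWalks n (r - 1)) with φ_def
  have telescope (r : ℕ) :
      ∑ q ∈ range N, octantKernel n 3 1 (r + 1 + 2 * (q + 1)) (r + 1) = φ r - φ (r + 1) := by
    rw [sum_range_octantKernel_three_one hN, φ_def]
    push_cast
    ring_nf
  have φ_last : φ N = 0 := by
    have far (a : ℤ) (ha : 0 ≤ a) : lineWalks n (N + a) = 0 :=
      lineWalks_eq_zero_of_lt_abs (by grind)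
    simp [φ_def, far, show lineWalks n N = 0 by simpa using far 0 le_rfl]
  rw [octantWalks, sum_congr rfl fun r _ => telescope r, sum_range_sub', φ_last]
  simp only [φ_def, Nat.cast_zero, zero_add, zero_sub, lineWalks_neg]
  ring

end OctantWalks

section GouyouBeauchamps

/-- The step set E, SE, W, NW of the Gouyou-Beauchamps model. -/
def gouyouBeauchampsSteps : Finset (Fin 2 → ℤ) :=
  {![1, 0], ![1, -1], ![-1, 0], ![-1, 1]}

theorem coe_gouyouBeauchampsSteps :
    (gouyouBeauchampsSteps : Set (Fin 2 → ℤ)) = {![1, 0], ![1, -1], ![-1, 0], ![-1, 1]} := by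
  simp [gouyouBeauchampsSteps]

theorem sum_gouyouBeauchampsSteps {M : Type*} [AddCommMonoid M] (f : (Fin 2 → ℤ) → M) :
    ∑ s ∈ gouyouBeauchampsSteps, f s =
      f ![1, 0] + f ![-1, 1] + f ![-1, 0] + f ![1, -1] := by
  rw [gouyouBeauchampsSteps, sum_insert (by decide), sum_insert (by decide),
    sum_insert (by decide), sum_singleton]
  abel

-- Each step raises `i + j` by at most `1`, so `hN` keeps all endpoints inside the truncation.
theorem walkCountFrom_eq_octantWalks {N n : ℕ} {i j : ℤ} (hi : -1 ≤ i) (hj : -1 ≤ j)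
    (hN : i + j + n < N) :
    (walkCountFrom gouyouBeauchampsSteps n ![i, j] : ℤ) =
      octantWalks N n (i + 2 * j + 3) (i + 1) := by
  have nonneg_iff (i j : ℤ) : 0 ≤ ![i, j] ↔ 0 ≤ i ∧ 0 ≤ j := by
    simp [Pi.le_def, Fin.forall_fin_two]
  have boundary (n : ℕ) {i j : ℤ} (h : i = -1 ∨ j = -1) :
      (walkCountFrom gouyouBeauchampsSteps n ![i, j] : ℤ) =
        octantWalks N n (i + 2 * j + 3) (i + 1) := by
    rw [walkCountFrom_of_not_nonneg _ _ (by rw [nonneg_iff]; omega), Nat.cast_zero]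
    rcases h with rfl | rfl
    · exact (octantWalks_zero_right _ _ _).symm
    · rw [show i + 2 * (-1) + 3 = i + 1 by ring, octantWalks_self]
  induction n generalizing i j with
  | zero =>
    by_cases hij : i = -1 ∨ j = -1
    · exact boundary 0 hij
    lift i to ℕ using by omega
    lift j to ℕ using by omega
    rw [walkCountFrom_zero _ ((nonneg_iff _ _).2 ⟨by omega, by omega⟩),
      octantWalks_zero (by omega) (by omega), Nat.cast_one]
  | succ n ih =>
    by_cases hij : i = -1 ∨ j = -1
    · exact boundary (n + 1) hij
    push_cast at hN
    rw [walkCountFrom_succ _ _ ((nonneg_iff _ _).2 ⟨by omega, by omega⟩),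
      sum_gouyouBeauchampsSteps, octantWalks_succ]
    simp only [Matrix.cons_add_cons, Matrix.empty_add_empty, add_zero]
    push_cast
    rw [ih (by omega) (by omega) (by omega), ih (by omega) (by omega) (by omega),
      ih (by omega) (by omega) (by omega), ih (by omega) (by omega) (by omega)]
    ring_nf

theorem walkCount_eq_lineWalks (n : ℕ) :
    (walkCount 2 gouyouBeauchampsSteps n : ℤ) =
      lineWalks n 0 ^ 2 - lineWalks n 2 ^ 2 +
        (lineWalks n 1 ^ 2 - lineWalks n 3 * lineWalks n 1) := by
  have origin : (0 : Fin 2 → ℤ) = ![0, 0] := by decide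
  rw [walkCount_eq_walkCountFrom_zero, origin,
    walkCountFrom_eq_octantWalks (N := n + 1) (by omega) (by omega) (by push_cast; omega)]
  exact octantWalks_three_one (by omega)

theorem choose_two_mul_add_one (k : ℕ) : (2 * k).choose (k + 1) = k * catalan k := by
  have ratio := Nat.choose_succ_right_eq (2 * k) k
  rw [← Nat.centralBinom_eq_two_mul_choose, ← succ_mul_catalan_eq_centralBinom,
    show 2 * k - k = k by omega] at ratio
  exact Nat.eq_of_mul_eq_mul_right k.succ_pos (by rw [ratio, Nat.succ_eq_add_one]; ring)

theorem two_mul_choose_two_mul_add_one (k : ℕ) :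
    2 * (2 * k + 1).choose (k + 1) = (k + 2) * catalan (k + 1) := by
  rw [succ_mul_catalan_eq_centralBinom (k + 1), Nat.centralBinom, mul_add_one,
    Nat.choose_succ_succ' (2 * k + 1), ← Nat.choose_symm_half]
  ring

theorem two_mul_choose_two_mul_add_one_add_two (k : ℕ) :
    2 * (2 * k + 1).choose (k + 2) = k * catalan (k + 1) := by
  have ratio := Nat.choose_succ_right_eq (2 * k + 1) (k + 1)
  rw [show 2 * k + 1 - (k + 1) = k by omega] at ratio
  refine Nat.eq_of_mul_eq_mul_right (Nat.add_pos_right k two_pos) ?_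
  linear_combination 2 * ratio + k * two_mul_choose_two_mul_add_one k

theorem walkCount_two_mul (k : ℕ) :
    walkCount 2 gouyouBeauchampsSteps (2 * k) = (2 * k + 1) * catalan k ^ 2 := by
  have at_zero : lineWalks (2 * k) 0 = (k + 1) * catalan k := by
    have h := lineWalks_two_mul_sub (2 * k) k
    rw [← Nat.centralBinom_eq_two_mul_choose, ← succ_mul_catalan_eq_centralBinom] at h
    simpa using h
  have at_one : lineWalks (2 * k) 1 = 0 := lineWalks_eq_zero_of_odd ⟨k, by push_cast; ring⟩
  have at_two : lineWalks (2 * k) 2 = k * catalan k := by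
    have h := lineWalks_two_mul_sub (2 * k) (k + 1)
    rw [choose_two_mul_add_one] at h
    convert h using 2 <;> push_cast <;> ring
  have h := walkCount_eq_lineWalks (2 * k)
  rw [at_zero, at_one, at_two] at h
  zify
  rw [h]
  ring

theorem two_mul_walkCount_two_mul_add_one (k : ℕ) :
    2 * walkCount 2 gouyouBeauchampsSteps (2 * k + 1) = (k + 2) * catalan (k + 1) ^ 2 := by
  have at_zero : lineWalks (2 * k + 1) 0 = 0 := lineWalks_eq_zero_of_odd ⟨k, by push_cast; ring⟩
  have at_one : lineWalks (2 * k + 1) 1 = (2 * k + 1).choose (k + 1) := by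
    rw [← lineWalks_two_mul_sub]
    congr 1
    push_cast
    ring
  have at_two : lineWalks (2 * k + 1) 2 = 0 :=
    lineWalks_eq_zero_of_odd ⟨k + 1, by push_cast; ring⟩
  have at_three : lineWalks (2 * k + 1) 3 = (2 * k + 1).choose (k + 2) := by
    rw [← lineWalks_two_mul_sub]
    congr 1
    push_cast
    ring
  have one_eq := congrArg (Nat.cast : ℕ → ℤ) (two_mul_choose_two_mul_add_one k)
  have three_eq := congrArg (Nat.cast : ℕ → ℤ) (two_mul_choose_two_mul_add_one_add_two k)
  have h := walkCount_eq_lineWalks (2 * k + 1)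
  rw [at_zero, at_one, at_two, at_three] at h
  push_cast at one_eq three_eq
  zify
  linear_combination 2 * h + ((2 * k + 1).choose (k + 1) + catalan (k + 1)) * one_eq -
    (2 * k + 1).choose (k + 1) * three_eq

end GouyouBeauchamps

section Asymptotics

open Real.Wallis

theorem centralBinom_sq_mul_wallis (k : ℕ) :
    (k.centralBinom : ℝ) ^ 2 * ((2 * k + 1) * W k) = 16 ^ k := by
  induction k with
  | zero => simp [W]
  | succ k ih =>
    have ratio : ((k : ℝ) + 1) * (k + 1).centralBinom = 2 * (2 * k + 1) * k.centralBinom := by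
      exact_mod_cast Nat.succ_mul_centralBinom_succ k
    rw [mul_comm, ← eq_div_iff (by positivity)] at ratio
    rw [pow_succ 16, ← ih, W_succ, ratio]
    push_cast
    field_simp
    ring

theorem walkCount_mul_wallis {n m : ℕ} (hm : (n + 1) / 2 = m) :
    (walkCount 2 gouyouBeauchampsSteps n : ℝ) * ((n + 2) * (2 * m + 2) * W m) = 4 ^ (n + 1) := by
  have wallis := centralBinom_sq_mul_wallis m
  rw [← succ_mul_catalan_eq_centralBinom] at wallis
  push_cast at wallis
  obtain ⟨k, rfl | rfl⟩ := Nat.even_or_odd' n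
  · obtain rfl : k = m := by omega
    rw [walkCount_two_mul, pow_succ 4, pow_mul]
    norm_num only [← wallis]
    push_cast
    ring
  · obtain rfl : k + 1 = m := by omega
    have count : 2 * (walkCount 2 gouyouBeauchampsSteps (2 * k + 1) : ℝ) =
        (k + 2) * catalan (k + 1) ^ 2 := by
      exact_mod_cast two_mul_walkCount_two_mul_add_one k
    rw [show 2 * k + 1 + 1 = 2 * (k + 1) by ring, pow_mul]
    norm_num only [← wallis]
    push_cast
    linear_combination (2 * (k : ℝ) + 3) * (k + 2) * W (k + 1) * count

theorem abs_div_wallis_sub_le {n m : ℕ} (hn : 1 ≤ n) (hm : (n + 1) / 2 = m) :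
    |4 * (n : ℝ) ^ 2 / ((n + 2) * (2 * m + 2) * W m) - 8 / Real.pi| ≤ 40 / Real.pi / n := by
  have hW := W_pos m
  have n_pos : (0 : ℝ) < n := by exact_mod_cast hn
  have le_two_mul : (n : ℝ) ≤ 2 * m := by exact_mod_cast (by omega : n ≤ 2 * m)
  have two_mul_le : (2 * m : ℝ) ≤ n + 1 := by exact_mod_cast (by omega : 2 * m ≤ n + 1)
  have upper : 4 * (n : ℝ) ^ 2 / ((n + 2) * (2 * m + 2) * W m) ≤ 8 / Real.pi :=
    calc 4 * (n : ℝ) ^ 2 / ((n + 2) * (2 * m + 2) * W m)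
        ≤ 4 * n ^ 2 /
            ((n + 2) * (2 * m + 2) * ((2 * m + 1) / (2 * m + 2) * (Real.pi / 2))) := by
          gcongr
          exact le_W m
      _ = 8 / Real.pi * (n ^ 2 / ((n + 2) * (2 * m + 1))) := by field_simp; ring
      _ ≤ 8 / Real.pi * 1 := by
          gcongr
          exact div_le_one_of_le₀ (by nlinarith) (by positivity)
      _ = 8 / Real.pi := mul_one _
  have lower : 8 / Real.pi - 40 / Real.pi / n ≤ 4 * (n : ℝ) ^ 2 / ((n + 2) * (2 * m + 2) * W m) :=
    calc 8 / Real.pi - 40 / Real.pi / n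
        = 8 / Real.pi * ((n - 5) / n) := by field_simp; ring
      _ ≤ 8 / Real.pi * (n ^ 2 / ((n + 2) * (n + 3))) := by
          gcongr 8 / Real.pi * ?_
          rw [div_le_div_iff₀ n_pos (by positivity)]
          nlinarith
      _ = 4 * n ^ 2 / ((n + 2) * (n + 1 + 2) * (Real.pi / 2)) := by field_simp; ring
      _ ≤ 4 * n ^ 2 / ((n + 2) * (2 * m + 2) * W m) := by
          gcongr
          exact W_le m
  rw [abs_le]
  constructor <;> linarith [show 0 ≤ 40 / Real.pi / n by positivity]

end Asymptotics

theorem asymptotics_E_SE_W_NW :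
    ∃ c : ℝ, 0 < c ∧ ∀ n : ℕ, 1 ≤ n →
      |(walkCount 2 {![1, 0], ![1, -1], ![-1, 0], ![-1, 1]} n : ℝ)
          * (4 : ℝ) ^ (-(n : ℤ)) * (n : ℝ) ^ 2
        - 8 / Real.pi|
      ≤ c / n := by
  refine ⟨40 / Real.pi, by positivity, fun n hn => ?_⟩
  have hW := Real.Wallis.W_pos ((n + 1) / 2)
  have count := walkCount_mul_wallis (n := n) rfl
  rw [coe_gouyouBeauchampsSteps, ← eq_div_iff (by positivity)] at count
  convert abs_div_wallis_sub_le hn rfl using 3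
  rw [count, zpow_neg, zpow_natCast, pow_succ]
  field_simp
end
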